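/- Let E be a finitely complete and cocomplete category equipped with a functorial cylinder I⊗(−) having a right adjoint. Let I be a class of maps, Cof = llp(rlp(I)), I_⊗ = { δᵏ ⊗̂ i : i ∈ I, k ∈ {0,1} }, and Fib = rlp(I_⊗). Assume that for every object X the unique map 0 → X from the initial object lies in Cof. Then for k ∈ {0,1}, the pullback of a strong k-oriented homotopy equivalence along a map in Fib is again a strong k-oriented homotopy equivalence: given a pullback square with right-hand vertical map g : B → Y a strong k-oriented homotopy equivalence and bottom map p : X → Y in Fib, the left-hand vertical map ḡ : A → X is a strong k-oriented homotopy equivalence. -/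

import Mathlib

/-!
Statement 8 (Lemma `thm:non-alg-frobenius-she`): the pullback of a strong `k`-oriented
homotopy equivalence along a fibration is a strong `k`-oriented homotopy equivalence.
-/

open CategoryTheory Category Limits

universe v u

namespace GS

variable {E : Type u} [Category.{v} E]

def rlp (J : MorphismProperty E) : MorphismProperty E :=
  fun _ _ p => ∀ ⦃A B : E⦄ (i : A ⟶ B), J i → HasLiftingProperty i p

def llp (J : MorphismProperty E) : MorphismProperty E :=
  fun _ _ i => ∀ ⦃X Y : E⦄ (p : X ⟶ Y), J p → HasLiftingProperty i p

structure Cylinder (E : Type u) [Category.{v} E] where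
  I : E ⥤ E
  δ : Fin 2 → (𝟭 E ⟶ I)

variable (Q : Cylinder E)

noncomputable def Cylinder.leibniz [HasPushouts E] (k : Fin 2) {A B : E} (i : A ⟶ B) :
    pushout ((Q.δ k).app A) i ⟶ Q.I.obj B :=
  pushout.desc (Q.I.map i) ((Q.δ k).app B) (by simpa using ((Q.δ k).naturality i).symm)

def IsStrongHEquivWith (k : Fin 2) {X Y : E} (f : X ⟶ Y)
    (g : Y ⟶ X) (φ : Q.I.obj X ⟶ X) (ψ : Q.I.obj Y ⟶ Y) : Prop :=
  (Q.δ k).app X ≫ φ = f ≫ g ∧ (Q.δ (1 - k)).app X ≫ φ = 𝟙 X ∧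
  (Q.δ k).app Y ≫ ψ = g ≫ f ∧ (Q.δ (1 - k)).app Y ≫ ψ = 𝟙 Y ∧
  φ ≫ f = Q.I.map f ≫ ψ

def IsStrongHEquiv (k : Fin 2) {X Y : E} (f : X ⟶ Y) : Prop :=
  ∃ g φ ψ, IsStrongHEquivWith Q k f g φ ψ

def fib [HasPushouts E] (I : MorphismProperty E) : MorphismProperty E :=
  fun _ _ p => ∀ ⦃A B : E⦄ (i : A ⟶ B), I i → ∀ k : Fin 2,
    HasLiftingProperty (Q.leibniz k i) p

/-!
Lifting against the Leibniz product of `δʲ` with `i` is the same as lifting `i` against the Leibniz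
exponential of `δʲ` with `p`, so a map in `Fib` lifts against the Leibniz product of `δʲ` with any
cofibration, not only with generators. For the cofibration `0 → X` this product is `δʲ : X → I⊗X`,
because `I⊗(-)` preserves the initial object. Lifting the homotopy `ψ ∘ (I⊗p)` along `p` starting
from the identity at the end `1 - k` gives a homotopy `ψ'` on `X`; everything else is induced by the
universal property of the pullback.
-/

section LeftAdjoints

variable (C D : Type*) [Category* C] [Category* D]

/-- The property of being a left adjoint. The full subcategory it cuts out serves as the parameter
category of an adjunction in which natural transformations, such as the endpoint inclusions of a
cylinder, are the parameter morphisms. -/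
def leftAdjoints : ObjectProperty (C ⥤ D) :=
  fun L => L.IsLeftAdjoint

instance (L : (leftAdjoints C D).FullSubcategory) :
    ((leftAdjoints C D).ι.obj L).IsLeftAdjoint :=
  L.property

/-- Passage to right adjoints, sending a natural transformation to its conjugate. -/
noncomputable def rightAdjoints : (leftAdjoints C D).FullSubcategoryᵒᵖ ⥤ D ⥤ C where
  obj L := ((leftAdjoints C D).ι.obj L.unop).rightAdjoint
  map α :=
    conjugateEquiv (.ofIsLeftAdjoint _) (.ofIsLeftAdjoint _) ((leftAdjoints C D).ι.map α.unop)
  map_id _ := conjugateEquiv_id _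
  map_comp α β := (conjugateEquiv_comp _ _ _ α.unop.hom β.unop.hom).symm

/-- The adjunctions `L ⊣ L.rightAdjoint`, for varying `L`, as an adjunction with parameter. -/
noncomputable def leftAdjointsParametrizedAdjunction :
    (leftAdjoints C D).ι ⊣₂ rightAdjoints C D where
  adj L := .ofIsLeftAdjoint ((leftAdjoints C D).ι.obj L)
  unit_whiskerRight_map α := by
    ext X
    exact (unit_conjugateEquiv (.ofIsLeftAdjoint _) (.ofIsLeftAdjoint _)
      ((leftAdjoints C D).ι.map α) X).symm

end LeftAdjoints

lemma hasLiftingProperty_ι_of_llp_rlp {C₁ C₂ C₃ : Type*} [Category* C₁] [Category* C₂]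
    [Category* C₃] [HasPullbacks C₂] {F : C₁ ⥤ C₂ ⥤ C₃} {G : C₁ᵒᵖ ⥤ C₃ ⥤ C₂} (adj₂ : F ⊣₂ G)
    {J : MorphismProperty C₂} {X₁ Y₁ : C₁} {f : X₁ ⟶ Y₁} {X Y : C₃} {p : X ⟶ Y}
    (hp : ∀ ⦃A B : C₂⦄ (i : A ⟶ B), J i →
      ∃ sq : F.PushoutObjObj f i, HasLiftingProperty sq.ι p)
    {A B : C₂} {i : A ⟶ B} (hi : llp (rlp J) i) (sq : F.PushoutObjObj f i) :
    HasLiftingProperty sq.ι p := by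
  let exponential : G.PullbackObjObj f p := .ofHasPullback G f p
  have exponential_mem_rlp : rlp J exponential.π := by
    intro A' B' j hj
    obtain ⟨sq', hsq'⟩ := hp j hj
    exact (adj₂.hasLiftingProperty_iff sq' exponential).mp hsq'
  exact (adj₂.hasLiftingProperty_iff sq exponential).mpr (hi _ exponential_mem_rlp)

namespace Cylinder

lemma δ_app_comp_map_assoc (j : Fin 2) {X Y Z : E} (f : X ⟶ Y) (t : Q.I.obj Y ⟶ Z) :
    (Q.δ j).app X ≫ Q.I.map f ≫ t = f ≫ (Q.δ j).app Y ≫ t :=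
  ((Q.δ j).naturality_assoc f t).symm

/-- The endpoint inclusion `δʲ` as a morphism of left adjoint functors. -/
def endpoint [Q.I.IsLeftAdjoint] (j : Fin 2) :
    (⟨𝟭 E, inferInstanceAs (𝟭 E).IsLeftAdjoint⟩ : (leftAdjoints E E).FullSubcategory) ⟶
      ⟨Q.I, ‹_›⟩ :=
  ObjectProperty.homMk (Q.δ j)

/-- The pushout square underlying `Q.leibniz j i`. -/
noncomputable def leibnizPushoutObjObj [HasPushouts E] [Q.I.IsLeftAdjoint] (j : Fin 2)
    {A B : E} (i : A ⟶ B) : (leftAdjoints E E).ι.PushoutObjObj (Q.endpoint j) i where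
  pt := pushout ((Q.δ j).app A) i
  inl := pushout.inl _ _
  inr := pushout.inr _ _
  isPushout := .of_hasPushout _ _
  ι := Q.leibniz j i
  inl_ι := pushout.inl_desc _ _ _
  inr_ι := pushout.inr_desc _ _ _

end Cylinder

variable {Q}

lemma fib.hasLiftingProperty_δ_app [HasPullbacks E] [HasPushouts E] [HasInitial E]
    [Q.I.IsLeftAdjoint] {I : MorphismProperty E} {X Y : E} {p : X ⟶ Y} (hp : fib Q I p)
    {W : E} (hW : llp (rlp I) (initial.to W)) (j : Fin 2) :
    HasLiftingProperty ((Q.δ j).app W) p :=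
  hasLiftingProperty_ι_of_llp_rlp (leftAdjointsParametrizedAdjunction E E)
    (fun _ _ i hi => ⟨Q.leibnizPushoutObjObj j i, hp i hi j⟩) hW
    (.ofIsInitialRight _ (Q.endpoint j) (initial.to W) initialIsInitial)

section IsPullback

variable {k : Fin 2} {A B X Y : E} {q : A ⟶ B} {gbar : A ⟶ X} {g : B ⟶ Y} {p : X ⟶ Y}

lemma IsStrongHEquivWith.of_isPullback (hpb : IsPullback q gbar g p)
    {h : Y ⟶ B} {φ : Q.I.obj B ⟶ B} {ψ : Q.I.obj Y ⟶ Y}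
    (hg : IsStrongHEquivWith Q k g h φ ψ) {ψ' : Q.I.obj X ⟶ X}
    (hψ' : (Q.δ (1 - k)).app X ≫ ψ' = 𝟙 X) (hψ'p : ψ' ≫ p = Q.I.map p ≫ ψ) :
    ∃ h' φ', IsStrongHEquivWith Q k gbar h' φ' ψ' := by
  obtain ⟨hφk, hφ, hψk, -, hφψ⟩ := hg
  have inverse_comm : (p ≫ h) ≫ g = ((Q.δ k).app X ≫ ψ') ≫ p := by
    rw [assoc, assoc, hψ'p, Q.δ_app_comp_map_assoc, hψk]
  have homotopy_comm : (Q.I.map q ≫ φ) ≫ g = (Q.I.map gbar ≫ ψ') ≫ p := by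
    rw [assoc, assoc, hψ'p, hφψ, ← Functor.map_comp_assoc, hpb.w, Functor.map_comp_assoc]
  refine ⟨hpb.lift _ _ inverse_comm, hpb.lift _ _ homotopy_comm,
    hpb.hom_ext ?_ ?_, hpb.hom_ext ?_ ?_, (hpb.lift_snd _ _ _).symm, hψ', hpb.lift_snd _ _ _⟩
  · simp only [assoc, IsPullback.lift_fst, Q.δ_app_comp_map_assoc, hφk, hpb.w_assoc]
  · simp only [assoc, IsPullback.lift_snd, Q.δ_app_comp_map_assoc]
  · simp only [assoc, IsPullback.lift_fst, Q.δ_app_comp_map_assoc, hφ,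
      Functor.id_obj, comp_id, id_comp]
  · simp only [assoc, IsPullback.lift_snd, Q.δ_app_comp_map_assoc, hψ',
      Functor.id_obj, comp_id, id_comp]

lemma IsStrongHEquiv.of_isPullback (hpb : IsPullback q gbar g p) (hg : IsStrongHEquiv Q k g)
    [HasLiftingProperty ((Q.δ (1 - k)).app X) p] : IsStrongHEquiv Q k gbar := by
  obtain ⟨h, φ, ψ, hg⟩ := hg
  have ⟨_, _, _, hψ, _⟩ := hg
  have sq : CommSq (𝟙 X) ((Q.δ (1 - k)).app X) p (Q.I.map p ≫ ψ) :=
    ⟨by rw [Q.δ_app_comp_map_assoc, hψ, id_comp, comp_id]⟩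
  obtain ⟨h', φ', hgbar⟩ := hg.of_isPullback hpb sq.fac_left sq.fac_right
  exact ⟨h', φ', sq.lift, hgbar⟩

end IsPullback

variable (Q)

theorem pullback_of_strongHEquiv_along_fib_general
    [HasPullbacks E] [HasPushouts E] [HasInitial E] [Q.I.IsLeftAdjoint]
    (I : MorphismProperty E) (k : Fin 2) {A B X Y : E} (hX : llp (rlp I) (initial.to X))
    (q : A ⟶ B) (gbar : A ⟶ X) (g : B ⟶ Y) (p : X ⟶ Y)
    (hpb : IsPullback q gbar g p)
    (hg : IsStrongHEquiv Q k g) (hp : fib Q I p) :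
    IsStrongHEquiv Q k gbar :=
  have := hp.hasLiftingProperty_δ_app hX (1 - k)
  .of_isPullback hpb hg

theorem pullback_of_strongHEquiv_along_fib
    [HasFiniteLimits E] [HasFiniteColimits E]
    (Exp : E ⥤ E) (adj : Q.I ⊣ Exp)
    (I : MorphismProperty E)
    -- every object is cofibrant: every map from the initial object is a cofibration
    (hS2 : ∀ X : E, llp (rlp I) (initial.to X))
    (k : Fin 2) {A B X Y : E}
    (q : A ⟶ B) (gbar : A ⟶ X) (g : B ⟶ Y) (p : X ⟶ Y)
    (hpb : IsPullback q gbar g p)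
    (hg : IsStrongHEquiv Q k g) (hp : fib Q I p) :
    IsStrongHEquiv Q k gbar :=
  have := adj.isLeftAdjoint
  pullback_of_strongHEquiv_along_fib_general Q I k (hS2 X) q gbar g p hpb hg hp

end GS
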